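/- arXiv:2210.04079 — 2 statements merged into one kernel-verified Lean document; each statement's English description precedes it below -/
import Mathlib

section
/- Suppose Φ, Γ and Λ are finite and positive definite, and b''(Xᵀβ₀)·‖LΦ⁻¹X‖ > 0 almost surely. Then Γ⁻¹ ≤ Φ⁻¹ Λ Φ⁻¹ and Γ⁻¹ Ω Γ⁻¹ ≥ Φ⁻¹, where the inequalities are in the Loewner ordering. -/
open MeasureTheory ProbabilityTheory Filter Matrix

noncomputable section

/-- Euclidean norm of a vector in `ℝ^p`. -/
def euclNorm {p : ℕ} (v : Fin p → ℝ) : ℝ := Real.sqrt (∑ i, v i ^ 2)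

theorem aux_bilin {Ω : Type*} [MeasurableSpace Ω] (μ : Measure Ω)
    {p : ℕ} (X : Ω → Fin p → ℝ) (a : Ω → ℝ) (A : Matrix (Fin p) (Fin p) ℝ)
    (hint : ∀ i j, Integrable (fun ω => a ω * (X ω i * X ω j)) μ)
    (hA : A = Matrix.of fun i j => ∫ ω, a ω * (X ω i * X ω j) ∂μ) (u w : Fin p → ℝ) :
    Integrable (fun ω => a ω * ((X ω ⬝ᵥ u) * (X ω ⬝ᵥ w))) μ ∧
    u ⬝ᵥ (A *ᵥ w) = ∫ ω, a ω * ((X ω ⬝ᵥ u) * (X ω ⬝ᵥ w)) ∂μ := by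
  have e : (fun ω => a ω * ((X ω ⬝ᵥ u) * (X ω ⬝ᵥ w))) =
      fun ω => ∑ i, ∑ j, (u i * w j) * (a ω * (X ω i * X ω j)) := by
    funext ω
    simp only [dotProduct]
    rw [Finset.sum_mul_sum]
    simp only [Finset.mul_sum]
    refine Finset.sum_congr rfl fun i _ => Finset.sum_congr rfl fun j _ => ?_
    ring
  have h1 : ∀ i j, Integrable (fun ω => (u i * w j) * (a ω * (X ω i * X ω j))) μ :=
    fun i j => (hint i j).const_mul _
  have h2 : ∀ i, Integrable (fun ω => ∑ j, (u i * w j) * (a ω * (X ω i * X ω j))) μ :=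
    fun i => integrable_finsetSum _ fun j _ => h1 i j
  rw [e]
  refine ⟨integrable_finsetSum _ fun i _ => h2 i, ?_⟩
  rw [integral_finsetSum _ fun i _ => h2 i]
  simp only [dotProduct, mulVec, Finset.mul_sum]
  refine Finset.sum_congr rfl fun i _ => ?_
  rw [integral_finsetSum _ fun j _ => h1 i j]
  refine Finset.sum_congr rfl fun j _ => ?_
  rw [integral_const_mul, hA]
  simp only [Matrix.of_apply]
  ring

theorem aux_main {Ω : Type*} [MeasurableSpace Ω] (μ : Measure Ω)
    {p : ℕ} (X : Ω → Fin p → ℝ) (a c d : Ω → ℝ) (A C D : Matrix (Fin p) (Fin p) ℝ)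
    (hAi : ∀ i j, Integrable (fun ω => a ω * (X ω i * X ω j)) μ)
    (hA : A = Matrix.of fun i j => ∫ ω, a ω * (X ω i * X ω j) ∂μ)
    (hCi : ∀ i j, Integrable (fun ω => c ω * (X ω i * X ω j)) μ)
    (hC : C = Matrix.of fun i j => ∫ ω, c ω * (X ω i * X ω j) ∂μ)
    (hDi : ∀ i j, Integrable (fun ω => d ω * (X ω i * X ω j)) μ)
    (hD : D = Matrix.of fun i j => ∫ ω, d ω * (X ω i * X ω j) ∂μ)
    (hApd : A.PosDef) (hCpd : C.PosDef)
    (hpos : ∀ᵐ ω ∂μ, 0 < a ω ∧ c ω ^ 2 = a ω * d ω) :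
    (C⁻¹ * D * C⁻¹ - A⁻¹).PosSemidef := by
  have hDs : D.IsHermitian := by
    ext i j
    simp only [hD, conjTranspose_apply, Matrix.of_apply, star_trivial]
    congr 1
    funext ω
    ring
  have hCs : C⁻¹.IsHermitian := hCpd.isHermitian.inv
  have hAs : A⁻¹.IsHermitian := hApd.isHermitian.inv
  have hCD : (C⁻¹ * D * C⁻¹).IsHermitian := by
    have := isHermitian_conjTranspose_mul_mul C⁻¹ hDs
    rwa [hCs.eq] at this
  refine PosSemidef.of_dotProduct_mulVec_nonneg (hCD.sub hAs) fun v => ?_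
  rw [star_trivial]
  have hCu : C *ᵥ (C⁻¹ *ᵥ v) = v := by
    rw [mulVec_mulVec, mul_nonsing_inv _ ((isUnit_iff_isUnit_det _).1 hCpd.isUnit), one_mulVec]
  have hAw : A *ᵥ (A⁻¹ *ᵥ v) = v := by
    rw [mulVec_mulVec, mul_nonsing_inv _ ((isUnit_iff_isUnit_det _).1 hApd.isUnit), one_mulVec]
  have hvC : v ᵥ* C⁻¹ = C⁻¹ *ᵥ v := by
    have ht : (C⁻¹)ᵀ = C⁻¹ := hCs
    rw [← mulVec_transpose, ht]
  have hexp : v ⬝ᵥ ((C⁻¹ * D * C⁻¹ - A⁻¹) *ᵥ v) =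
      (C⁻¹ *ᵥ v) ⬝ᵥ (D *ᵥ (C⁻¹ *ᵥ v)) - v ⬝ᵥ (A⁻¹ *ᵥ v) := by
    rw [sub_mulVec, dotProduct_sub, ← mulVec_mulVec, ← mulVec_mulVec, dotProduct_mulVec v C⁻¹, hvC]
  rw [hexp]
  obtain ⟨i1, e1⟩ := aux_bilin μ X d D hDi hD (C⁻¹ *ᵥ v) (C⁻¹ *ᵥ v)
  obtain ⟨i2, e2⟩ := aux_bilin μ X c C hCi hC (A⁻¹ *ᵥ v) (C⁻¹ *ᵥ v)
  obtain ⟨i3, e3⟩ := aux_bilin μ X a A hAi hA (A⁻¹ *ᵥ v) (A⁻¹ *ᵥ v)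
  rw [hCu, dotProduct_comm] at e2
  rw [hAw, dotProduct_comm] at e3
  set u := C⁻¹ *ᵥ v
  set w := A⁻¹ *ᵥ v
  have key : 0 ≤ ∫ ω, ((d ω * ((X ω ⬝ᵥ u) * (X ω ⬝ᵥ u)) - 2 * (c ω * ((X ω ⬝ᵥ w) * (X ω ⬝ᵥ u))))
      + a ω * ((X ω ⬝ᵥ w) * (X ω ⬝ᵥ w))) ∂μ := by
    apply integral_nonneg_of_ae
    filter_upwards [hpos] with ω ⟨h1, h2⟩
    simp only [Pi.zero_apply]
    refine (mul_nonneg_iff_of_pos_left h1).1 ?_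
    have : a ω * ((d ω * ((X ω ⬝ᵥ u) * (X ω ⬝ᵥ u)) - 2 * (c ω * ((X ω ⬝ᵥ w) * (X ω ⬝ᵥ u))))
      + a ω * ((X ω ⬝ᵥ w) * (X ω ⬝ᵥ w))) = (c ω * (X ω ⬝ᵥ u) - a ω * (X ω ⬝ᵥ w)) ^ 2 := by
      linear_combination (-(X ω ⬝ᵥ u) ^ 2) * h2
    rw [this]
    positivity
  have i4 : Integrable (fun ω => d ω * ((X ω ⬝ᵥ u) * (X ω ⬝ᵥ u))
      - 2 * (c ω * ((X ω ⬝ᵥ w) * (X ω ⬝ᵥ u)))) μ := i1.sub (i2.const_mul 2)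
  rw [integral_add i4 i3, integral_sub i1 (i2.const_mul 2),
    integral_const_mul, ← e1, ← e2, ← e3] at key
  linarith

/-- Theorem 2, efficiency comparison.  `Ξ` plays the role of the
matrix `Ω` of the paper (the letter `Ω` is used for the sample space).
The conclusion `Γ⁻¹ ≤ Φ⁻¹ Λ Φ⁻¹` and `Γ⁻¹ Ξ Γ⁻¹ ≥ Φ⁻¹` is stated in the
Loewner ordering: `A ≤ B` iff `B - A` is positive semidefinite. -/
theorem unweighted_estimator_efficiency
    {Ω : Type*} [MeasurableSpace Ω] (μ : Measure Ω) [IsProbabilityMeasure μ]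
    {p : ℕ} (X : Ω → Fin p → ℝ) (hX : Measurable X)
    (β₀ : Fin p → ℝ) (b'' : ℝ → ℝ)
    (hb_cont : Continuous b'') (hb_bdd : ∃ M, ∀ t, |b'' t| ≤ M)
    (hb_nonneg : ∀ t, 0 ≤ b'' t)
    (L Φ Γ Λ Ξ : Matrix (Fin p) (Fin p) ℝ)
    -- Φ := E[b''(Xᵀβ₀) X Xᵀ], entrywise Bochner integrable
    (hΦint : ∀ i j, Integrable (fun ω => b'' (X ω ⬝ᵥ β₀) * (X ω i * X ω j)) μ)
    (hΦ : Φ = Matrix.of fun i j => ∫ ω, b'' (X ω ⬝ᵥ β₀) * (X ω i * X ω j) ∂μ)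
    -- Γ := E[(b''(Xᵀβ₀))^{3/2} ‖LΦ⁻¹X‖ X Xᵀ]
    (hΓint : ∀ i j, Integrable (fun ω =>
      b'' (X ω ⬝ᵥ β₀) ^ ((3 : ℝ) / 2) * euclNorm ((L * Φ⁻¹).mulVec (X ω))
        * (X ω i * X ω j)) μ)
    (hΓ : Γ = Matrix.of fun i j => ∫ ω,
      b'' (X ω ⬝ᵥ β₀) ^ ((3 : ℝ) / 2) * euclNorm ((L * Φ⁻¹).mulVec (X ω))
        * (X ω i * X ω j) ∂μ)
    -- Λ := E[b''(Xᵀβ₀) X Xᵀ / ((b''(Xᵀβ₀))^{1/2} ‖LΦ⁻¹X‖)]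
    (hΛint : ∀ i j, Integrable (fun ω =>
      b'' (X ω ⬝ᵥ β₀) * (X ω i * X ω j) /
        (Real.sqrt (b'' (X ω ⬝ᵥ β₀)) * euclNorm ((L * Φ⁻¹).mulVec (X ω)))) μ)
    (hΛ : Λ = Matrix.of fun i j => ∫ ω,
      b'' (X ω ⬝ᵥ β₀) * (X ω i * X ω j) /
        (Real.sqrt (b'' (X ω ⬝ᵥ β₀)) * euclNorm ((L * Φ⁻¹).mulVec (X ω))) ∂μ)
    -- Ξ := E[(b''(Xᵀβ₀))² ‖LΦ⁻¹X‖² X Xᵀ]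
    (hΞint : ∀ i j, Integrable (fun ω =>
      b'' (X ω ⬝ᵥ β₀) ^ 2 * euclNorm ((L * Φ⁻¹).mulVec (X ω)) ^ 2
        * (X ω i * X ω j)) μ)
    (hΞ : Ξ = Matrix.of fun i j => ∫ ω,
      b'' (X ω ⬝ᵥ β₀) ^ 2 * euclNorm ((L * Φ⁻¹).mulVec (X ω)) ^ 2
        * (X ω i * X ω j) ∂μ)
    -- Φ, Γ and Λ are positive definite
    (hΦpd : Φ.PosDef) (hΓpd : Γ.PosDef) (hΛpd : Λ.PosDef)
    -- b''(Xᵀβ₀)·‖LΦ⁻¹X‖ > 0 almost surely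
    (hpos : ∀ᵐ ω ∂μ, 0 < b'' (X ω ⬝ᵥ β₀) * euclNorm ((L * Φ⁻¹).mulVec (X ω))) :
    (Φ⁻¹ * Λ * Φ⁻¹ - Γ⁻¹).PosSemidef ∧ (Γ⁻¹ * Ξ * Γ⁻¹ - Φ⁻¹).PosSemidef := by
  have hP : ∀ᵐ ω ∂μ, 0 < b'' (X ω ⬝ᵥ β₀) ∧ 0 < euclNorm ((L * Φ⁻¹).mulVec (X ω)) := by
    filter_upwards [hpos] with ω h
    have hb : 0 < b'' (X ω ⬝ᵥ β₀) := by
      refine lt_of_le_of_ne (hb_nonneg _) fun h0 => ?_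
      rw [← h0, zero_mul] at h
      exact lt_irrefl _ h
    exact ⟨hb, (mul_pos_iff_of_pos_left hb).1 h⟩
  have hpow : ∀ x : ℝ, 0 < x → x ^ ((3 : ℝ) / 2) = x * √x := by
    intro x hx
    rw [Real.sqrt_eq_rpow, show (3 : ℝ) / 2 = 1 + 1 / 2 by norm_num, Real.rpow_add hx,
      Real.rpow_one]
  constructor
  · simp only [mul_div_right_comm] at hΛint hΛ
    refine aux_main μ X _ _ _ Γ Φ Λ hΓint hΓ hΦint hΦ hΛint hΛ hΓpd hΦpd ?_
    filter_upwards [hP] with ω ⟨h1, h2⟩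
    refine ⟨mul_pos (Real.rpow_pos_of_pos h1 _) h2, ?_⟩
    rw [hpow _ h1]
    have := Real.sqrt_pos.2 h1
    field_simp
  · refine aux_main μ X _ _ _ Φ Γ Ξ hΦint hΦ hΓint hΓ hΞint hΞ hΦpd hΓpd ?_
    filter_upwards [hP] with ω ⟨h1, h2⟩
    refine ⟨h1, ?_⟩
    rw [hpow _ h1, mul_pow, mul_pow, Real.sq_sqrt h1.le]
    ring
end
end

section
/- Let v be a random vector in ℝ^p and h a random variable with h > 0 almost surely, such that the matrices E[v vᵀ], E[h v vᵀ] and E[h⁻¹ v vᵀ] exist (Bochner integrable) and E[v vᵀ] and E[h v vᵀ] are positive definite. Then E[h v vᵀ]⁻¹ ≤ E[v vᵀ]⁻¹ E[h⁻¹ v vᵀ] E[v vᵀ]⁻¹ in the Loewner ordering. -/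
open MeasureTheory ProbabilityTheory Filter Matrix

noncomputable section

theorem aux_quad {Ω : Type*} [MeasurableSpace Ω] (μ : Measure Ω)
    {p : ℕ} (v : Ω → Fin p → ℝ) (w : Ω → ℝ)
    (hint : ∀ i j, Integrable (fun ω => w ω * (v ω i * v ω j)) μ) (y z : Fin p → ℝ) :
    Integrable (fun ω => w ω * ((y ⬝ᵥ v ω) * (z ⬝ᵥ v ω))) μ ∧
    y ⬝ᵥ ((Matrix.of fun i j => ∫ ω, w ω * (v ω i * v ω j) ∂μ) *ᵥ z) =
      ∫ ω, w ω * ((y ⬝ᵥ v ω) * (z ⬝ᵥ v ω)) ∂μ := by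
  have e : (fun ω => w ω * ((y ⬝ᵥ v ω) * (z ⬝ᵥ v ω))) =
      fun ω => ∑ i, ∑ j, (y i * z j) * (w ω * (v ω i * v ω j)) := by
    funext ω
    simp only [dotProduct]
    rw [Finset.sum_mul_sum, Finset.mul_sum]
    simp only [Finset.mul_sum]
    refine Finset.sum_congr rfl fun i _ => Finset.sum_congr rfl fun j _ => ?_
    ring
  have hi : ∀ i j, Integrable (fun ω => (y i * z j) * (w ω * (v ω i * v ω j))) μ :=
    fun i j => (hint i j).const_mul _
  rw [e]
  refine ⟨integrable_finsetSum _ fun i _ => integrable_finsetSum _ fun j _ => hi i j, ?_⟩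
  rw [integral_finsetSum _ fun i _ => integrable_finsetSum _ fun j _ => hi i j]
  simp only [dotProduct, mulVec, Finset.mul_sum, Matrix.of_apply]
  refine Finset.sum_congr rfl fun i _ => ?_
  rw [integral_finsetSum _ fun j _ => hi i j]
  refine Finset.sum_congr rfl fun j _ => ?_
  rw [integral_const_mul]
  ring

/-- if `h > 0` a.s. and `B := E[v vᵀ]`, `A := E[h v vᵀ]` are positive
definite while `C := E[h⁻¹ v vᵀ]` exists (expectations taken entrywise), then
`A⁻¹ ≤ B⁻¹ C B⁻¹` in the Loewner ordering, i.e. `B⁻¹ C B⁻¹ - A⁻¹` is PSD. -/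
theorem inv_exp_smul_le_exp_inv_smul
    {Ω : Type*} [MeasurableSpace Ω] (μ : Measure Ω) [IsProbabilityMeasure μ]
    {p : ℕ} (v : Ω → Fin p → ℝ) (h : Ω → ℝ)
    (hv : Measurable v) (hh : Measurable h)
    (hpos : ∀ᵐ ω ∂μ, 0 < h ω)
    (hBint : ∀ i j, Integrable (fun ω => v ω i * v ω j) μ)
    (hAint : ∀ i j, Integrable (fun ω => h ω * (v ω i * v ω j)) μ)
    (hCint : ∀ i j, Integrable (fun ω => (h ω)⁻¹ * (v ω i * v ω j)) μ)
    (A B C : Matrix (Fin p) (Fin p) ℝ)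
    (hA : A = Matrix.of fun i j => ∫ ω, h ω * (v ω i * v ω j) ∂μ)
    (hB : B = Matrix.of fun i j => ∫ ω, v ω i * v ω j ∂μ)
    (hC : C = Matrix.of fun i j => ∫ ω, (h ω)⁻¹ * (v ω i * v ω j) ∂μ)
    (hApd : A.PosDef) (hBpd : B.PosDef) :
    (B⁻¹ * C * B⁻¹ - A⁻¹).PosSemidef := by
  have hCs : C.IsHermitian := by
    ext i j
    simp [hC, mul_comm (v _ i)]
  have key : ∀ y z : Fin p → ℝ,
      0 ≤ y ⬝ᵥ (C *ᵥ y) - 2 * (y ⬝ᵥ (B *ᵥ z)) + z ⬝ᵥ (A *ᵥ z) := by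
    intro y z
    obtain ⟨iC, eC⟩ := aux_quad μ v (fun ω => (h ω)⁻¹) hCint y y
    obtain ⟨iA, eA⟩ := aux_quad μ v h hAint z z
    obtain ⟨iB, eB⟩ := aux_quad μ v (fun _ => 1) (by simpa using hBint) y z
    simp only [one_mul] at iB eB
    rw [hA, hB, hC, eA, eB, eC, ← integral_const_mul, ← integral_sub iC (iB.const_mul 2)]
    have iD : Integrable (fun ω => (h ω)⁻¹ * ((y ⬝ᵥ v ω) * (y ⬝ᵥ v ω)) -
        2 * ((y ⬝ᵥ v ω) * (z ⬝ᵥ v ω))) μ := iC.sub (iB.const_mul 2)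
    rw [← integral_add iD iA]
    refine integral_nonneg_of_ae ?_
    filter_upwards [hpos] with ω hω
    have : (h ω)⁻¹ * ((y ⬝ᵥ v ω) * (y ⬝ᵥ v ω)) - 2 * ((y ⬝ᵥ v ω) * (z ⬝ᵥ v ω)) +
        h ω * ((z ⬝ᵥ v ω) * (z ⬝ᵥ v ω)) = (h ω)⁻¹ * (y ⬝ᵥ v ω - h ω * (z ⬝ᵥ v ω)) ^ 2 := by
      field_simp
      ring
    simp only [Pi.zero_apply]
    refine le_of_le_of_eq ?_ this.symm
    positivity
  have hBi := hBpd.inv.isHermitian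
  have hAi := hApd.inv.isHermitian
  have hBT : (B⁻¹)ᵀ = B⁻¹ := by simpa [IsHermitian] using hBi
  have hBT' : Bᵀ = B := by simpa [IsHermitian] using hBpd.isHermitian
  have uA : IsUnit A.det := (Matrix.isUnit_iff_isUnit_det A).1 hApd.isUnit
  have uB : IsUnit B.det := (Matrix.isUnit_iff_isUnit_det B).1 hBpd.isUnit
  refine PosSemidef.of_dotProduct_mulVec_nonneg ?_ ?_
  · refine IsHermitian.sub ?_ hAi
    have := isHermitian_mul_mul_conjTranspose B⁻¹ hCs
    rwa [hBi.eq] at this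
  · intro x
    have k := key (B⁻¹ *ᵥ x) (A⁻¹ *ᵥ x)
    have e1 : A *ᵥ (A⁻¹ *ᵥ x) = x := by rw [mulVec_mulVec, mul_nonsing_inv _ uA, one_mulVec]
    have e2 : ∀ t, (B⁻¹ *ᵥ x) ⬝ᵥ t = x ⬝ᵥ (B⁻¹ *ᵥ t) := by
      intro t
      rw [dotProduct_mulVec, ← mulVec_transpose, hBT]
    have e3 : ∀ t, B⁻¹ *ᵥ (B *ᵥ t) = t := by
      intro t
      rw [mulVec_mulVec, nonsing_inv_mul _ uB, one_mulVec]
    rw [e1, e2, e2, e3, dotProduct_comm (A⁻¹ *ᵥ x) x] at k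
    simp only [star_trivial, sub_mulVec, dotProduct_sub, ← mulVec_mulVec]
    linarith
end
end
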